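/- With b₀(t,M) = −(M−1)(M+1)(1+M²)t⁴(−M² − M⁴ − M⁶ + t⁴ + M⁸t⁴ − M⁴t⁸) / (M²(M−t)(M+t)(Mt−1)(Mt+1)(M²+t²)(1+M²t²)) ∈ ℂ(t,M), the following three identities hold in ℂ(t,M): p₁(t,M) = a₁(t,M)·b₀ + a₀(t,t²M)/a₁(t,t²M); p₋₁(t,M) = a₋₁(t,M)·b₀ + a₀(t,t⁻²M)/a₋₁(t,t⁻²M); and p₀(t,M) = a₀(t,M)·b₀ + a₁(t,t⁻²M)/a₋₁(t,t⁻²M) + a₋₁(t,t²M)/a₁(t,t²M). -/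

import Mathlib

/-!
The shifts fold the denominators back onto the coefficients: `a₁(t,t²M) = a₋₁(t,M)` and
`a₋₁(t,t⁻²M) = a₁(t,M)`. Cancelling the common monomial `t⁴M⁶` gives `b₀ = -n₀ / (a₁ a₋₁)` with `n₀`
a Laurent polynomial, so over the common denominator `a₁ a₋₁` the three formulas become
`p₁ a₋₁ = a₀(t,t²M) - n₀`, `p₋₁ a₁ = a₀(t,t⁻²M) - n₀` and
`p₀ a₁ a₋₁ = a₁(t,t⁻²M) a₋₁ + a₋₁(t,t²M) a₁ - a₀ n₀`. These are identities in `ℂ[t^{±1}, M^{±1}]`,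
which are verified by multiplying monomials.
-/

noncomputable section

/-- The Laurent polynomial ring `ℂ[t^{±1}, M^{±1}]`, realized as the group algebra of `ℤ × ℤ`
over `ℂ`.  The element `mon a b` below is the monomial `t^a * M^b`. -/
abbrev R2 : Type := AddMonoidAlgebra ℂ (ℤ × ℤ)

instance : IsDomain R2 := NoZeroDivisors.to_isDomain _

/-- The monomial `t^a * M^b` in `ℂ[t^{±1}, M^{±1}]`. -/
def mon (a b : ℤ) : R2 := AddMonoidAlgebra.single (a, b) (1 : ℂ)
/-- The exponent map corresponding to the substitution `(t, M) ↦ (t, t²M)`. -/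
def eU : (ℤ × ℤ) ≃+ (ℤ × ℤ) where
  toFun p := (p.1 + 2 * p.2, p.2)
  invFun p := (p.1 - 2 * p.2, p.2)
  left_inv p := by ext <;> simp
  right_inv p := by ext <;> simp
  map_add' p q := by ext <;> simp <;> ring

/-- The exponent map corresponding to the substitution `(t, M) ↦ (t, t⁻²M)`. -/
def eD : (ℤ × ℤ) ≃+ (ℤ × ℤ) where
  toFun p := (p.1 - 2 * p.2, p.2)
  invFun p := (p.1 + 2 * p.2, p.2)
  left_inv p := by ext <;> simp
  right_inv p := by ext <;> simp
  map_add' p q := by ext <;> simp <;> ring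

/-- The exponent map corresponding to the substitution `(t, M) ↦ (t, M⁻¹)`. -/
def eI : (ℤ × ℤ) ≃+ (ℤ × ℤ) where
  toFun p := (p.1, -p.2)
  invFun p := (p.1, -p.2)
  left_inv p := by ext <;> simp
  right_inv p := by ext <;> simp
  map_add' p q := by ext <;> simp <;> ring

/-- The substitution automorphism `F(t, M) ↦ F(t, t²M)` of `ℂ[t^{±1}, M^{±1}]`. -/
def sU : R2 ≃ₐ[ℂ] R2 := AddMonoidAlgebra.domCongr ℂ ℂ eU

/-- The substitution automorphism `F(t, M) ↦ F(t, t⁻²M)` of `ℂ[t^{±1}, M^{±1}]`. -/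
def sD : R2 ≃ₐ[ℂ] R2 := AddMonoidAlgebra.domCongr ℂ ℂ eD

/-- The substitution automorphism `F(t, M) ↦ F(t, M⁻¹)` of `ℂ[t^{±1}, M^{±1}]`. -/
def sI : R2 ≃ₐ[ℂ] R2 := AddMonoidAlgebra.domCongr ℂ ℂ eI
/-- `a₁(t,M) = t⁻²M² − t²M⁻²`. -/
def a1 : R2 := mon (-2) 2 - mon 2 (-2)

/-- `a₋₁(t,M) = t²M² − t⁻²M⁻²`. -/
def am1 : R2 := mon 2 2 - mon (-2) (-2)

/-- `a₀(t,M) = (M² − M⁻²)(−M⁴ − M⁻⁴ + M² + M⁻² + t⁴ + t⁻⁴)`. -/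
def a0 : R2 :=
  (mon 0 2 - mon 0 (-2)) *
    (-(mon 0 4) - mon 0 (-4) + mon 0 2 + mon 0 (-2) + mon 4 0 + mon (-4) 0)

/-- `A₁(t,M) = −a₁(t,M)·a₁(t,t²M)·a₋₁(t,t⁻²M)`. -/
def A1 : R2 := -(a1 * sU a1 * sD am1)

/-- `B₁(t,M) = a₀(t,M)·a₁(t,t²M)·a₋₁(t,t⁻²M)`. -/
def B1 : R2 := a0 * sU a1 * sD am1

/-- `C₁(t,M) = −a₁(t,M)·a₁(t,t⁻²M)·a₁(t,t²M) + a₀(t,M)·a₀(t,t²M)·a₋₁(t,t⁻²M)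
    − a₁(t,M)·a₋₁(t,t⁻²M)·a₋₁(t,t²M)`. -/
def C1 : R2 := -(a1 * sD a1 * sU a1) + a0 * sU a0 * sD am1 - a1 * sD am1 * sU am1
/-- The fraction field `ℂ(t, M)` of the Laurent polynomial ring `ℂ[t^{±1}, M^{±1}]`. -/
abbrev K2 : Type := FractionRing R2

/-- The canonical inclusion `ℂ[t^{±1}, M^{±1}] → ℂ(t, M)`. -/
def ι : R2 →+* K2 := algebraMap R2 K2

/-- The substitution automorphism of `ℂ(t,M)` fixing `t` and sending `M` to `M⁻¹`. -/
def σI : K2 ≃+* K2 := IsFractionRing.ringEquivOfRingEquiv (sI : R2 ≃+* R2)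
/-- `p₁(t,M) = M⁻⁴t⁻¹⁰·(−1 − t¹⁶ + M⁴t⁸(1+t⁴)² + M²(t⁴+t¹²) + M⁶(t⁸+t¹⁶) − M⁸(t¹²+t²⁰))`. -/
def P1 : R2 :=
  mon (-10) (-4) *
    (-1 - mon 16 0 + mon 8 4 * (1 + mon 4 0) ^ 2 + mon 0 2 * (mon 4 0 + mon 12 0)
      + mon 0 6 * (mon 8 0 + mon 16 0) - mon 0 8 * (mon 12 0 + mon 20 0))

/-- `p₋₁(t,M) = M⁻⁴t⁻¹⁰·(M⁴t⁸(1+t⁴)² − t¹²(1+t⁸) + M⁶(t⁴+t¹²) − M⁸(1+t¹⁶) + M²(t⁸+t¹⁶))`. -/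
def Pm1 : R2 :=
  mon (-10) (-4) *
    (mon 8 4 * (1 + mon 4 0) ^ 2 - mon 12 0 * (1 + mon 8 0) + mon 0 6 * (mon 4 0 + mon 12 0)
      - mon 0 8 * (1 + mon 16 0) + mon 0 2 * (mon 8 0 + mon 16 0))

/-- `p₀(t,M) = M⁻⁸t⁻⁴·(t⁸ + M¹⁶t⁸ − M⁴t⁸(2+t⁴) − M¹²t⁸(2+t⁴) − M²(t⁴+t⁸) + M⁶(t⁴+t⁸)
    + M¹⁰(t⁴+t⁸) − M¹⁴(t⁴+t⁸) + 2M⁸(1+t⁴+2t⁸+t¹²))`. -/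
def P0 : R2 :=
  mon (-4) (-8) *
    (mon 8 0 + mon 8 16 - mon 8 4 * (2 + mon 4 0) - mon 8 12 * (2 + mon 4 0)
      - mon 0 2 * (mon 4 0 + mon 8 0) + mon 0 6 * (mon 4 0 + mon 8 0)
      + mon 0 10 * (mon 4 0 + mon 8 0) - mon 0 14 * (mon 4 0 + mon 8 0)
      + 2 * mon 0 8 * (1 + mon 4 0 + 2 * mon 8 0 + mon 12 0))

/-- Numerator `(M−1)(M+1)(1+M²)t⁴(−M² − M⁴ − M⁶ + t⁴ + M⁸t⁴ − M⁴t⁸)`. -/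
def b0num : R2 :=
  (mon 0 1 - 1) * (mon 0 1 + 1) * (1 + mon 0 2) * mon 4 0 *
    (-(mon 0 2) - mon 0 4 - mon 0 6 + mon 4 0 + mon 4 8 - mon 8 4)

/-- Denominator `M²(M−t)(M+t)(Mt−1)(Mt+1)(M²+t²)(1+M²t²)`. -/
def b0den : R2 :=
  mon 0 2 * (mon 0 1 - mon 1 0) * (mon 0 1 + mon 1 0) * (mon 1 1 - 1) * (mon 1 1 + 1) *
    (mon 0 2 + mon 2 0) * (1 + mon 2 2)

/-- The rational function
`b₀(t,M) = −(M−1)(M+1)(1+M²)t⁴(−M² − M⁴ − M⁶ + t⁴ + M⁸t⁴ − M⁴t⁸)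
/ (M²(M−t)(M+t)(Mt−1)(Mt+1)(M²+t²)(1+M²t²)) ∈ ℂ(t,M)`. -/
def b0 : K2 := -(ι b0num / ι b0den)

lemma mon_mul_mon (a b c d : ℤ) : mon a b * mon c d = mon (a + c) (b + d) := by
  simp [mon, AddMonoidAlgebra.single_mul_single]

lemma mon_zero_zero : mon 0 0 = 1 := rfl

lemma mon_ne_zero (a b : ℤ) : mon a b ≠ 0 := by
  simp [mon, AddMonoidAlgebra.single_eq_zero]

lemma mon_injective2 : Function.Injective2 mon := fun a c b d h ↦ by
  simpa using AddMonoidAlgebra.single_left_injective (one_ne_zero (α := ℂ)) h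

lemma sU_mon (a b : ℤ) : sU (mon a b) = mon (a + 2 * b) b := by
  simp [sU, mon, eU, AddMonoidAlgebra.domCongr_single]

lemma sD_mon (a b : ℤ) : sD (mon a b) = mon (a - 2 * b) b := by
  simp [sD, mon, eD, AddMonoidAlgebra.domCongr_single]

lemma ι_ne_zero {F : R2} (hF : F ≠ 0) : ι F ≠ 0 :=
  IsFractionRing.to_map_ne_zero_of_mem_nonZeroDivisors (mem_nonZeroDivisors_of_ne_zero hF)

lemma sU_a1 : sU a1 = am1 := by
  simp [a1, am1, sU_mon]

lemma sD_am1 : sD am1 = a1 := by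
  simp [a1, am1, sD_mon]

lemma a1_ne_zero : a1 ≠ 0 :=
  sub_ne_zero.2 fun h ↦ absurd (mon_injective2 h).1 (by decide)

lemma am1_ne_zero : am1 ≠ 0 :=
  sub_ne_zero.2 fun h ↦ absurd (mon_injective2 h).1 (by decide)

/-- The Laurent polynomial
`n₀(t,M) = (M² − M⁻²)(t⁴M⁴ + t⁴M⁻⁴ − M² − M⁻² − 1 − t⁸)`, which is the numerator of `−b₀` over the
denominator `a₁ a₋₁`. -/
def n0 : R2 :=
  (mon 0 2 - mon 0 (-2)) * (mon 4 4 + mon 4 (-4) - mon 0 2 - mon 0 (-2) - 1 - mon 8 0)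

lemma b0num_eq_mon_mul_n0 : b0num = mon 4 6 * n0 := by
  simp only [b0num, n0, ← mon_zero_zero, mul_add, add_mul, mul_sub, sub_mul, mul_neg, mon_mul_mon]
  norm_num only
  ring

lemma b0den_eq_mon_mul_a1_mul_am1 : b0den = mon 4 6 * (a1 * am1) := by
  simp only [b0den, a1, am1, ← mon_zero_zero, mul_add, add_mul, mul_sub, sub_mul, mon_mul_mon]
  norm_num only
  ring

lemma b0_eq_neg_n0_div : b0 = -(ι n0 / (ι a1 * ι am1)) := by
  rw [b0, b0num_eq_mon_mul_n0, b0den_eq_mon_mul_a1_mul_am1, map_mul, map_mul, map_mul,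
    mul_div_mul_left _ _ (ι_ne_zero (mon_ne_zero 4 6))]

lemma P1_mul_am1 : P1 * am1 = sU a0 - n0 := by
  simp only [P1, am1, a0, n0, map_add, map_sub, map_neg, sU_mon, ← mon_zero_zero, pow_two,
    mul_add, add_mul, mul_sub, sub_mul, mul_neg, neg_mul, mon_mul_mon]
  norm_num only
  ring

lemma Pm1_mul_a1 : Pm1 * a1 = sD a0 - n0 := by
  simp only [Pm1, a1, a0, n0, map_add, map_sub, map_neg, sD_mon, ← mon_zero_zero, pow_two,
    mul_add, add_mul, mul_sub, sub_mul, mul_neg, mon_mul_mon]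
  norm_num only
  ring

lemma P0_mul_a1_mul_am1 : P0 * (a1 * am1) = sD a1 * am1 + sU am1 * a1 - a0 * n0 := by
  simp only [P0, a1, am1, a0, n0, map_sub, sU_mon, sD_mon, ← mon_zero_zero,
    ← one_add_one_eq_two (R := R2), mul_add, add_mul, mul_sub, sub_mul, mul_neg, neg_mul,
    mon_mul_mon]
  norm_num only
  ring

/-- With the explicit `b₀`, the Laurent polynomials `p₁, p₋₁, p₀` are given by the
formulas `pᵢ = aᵢ·b₀ + (correction terms)` in `ℂ(t,M)`. -/
theorem explicit_solution_formulas :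
    ι P1 = ι a1 * b0 + ι (sU a0) / ι (sU a1) ∧
      ι Pm1 = ι am1 * b0 + ι (sD a0) / ι (sD am1) ∧
      ι P0 = ι a0 * b0 + ι (sD a1) / ι (sD am1) + ι (sU am1) / ι (sU a1) := by
  have ha1 : ι a1 ≠ 0 := ι_ne_zero a1_ne_zero
  have ham1 : ι am1 ≠ 0 := ι_ne_zero am1_ne_zero
  have hP1 := congrArg ι P1_mul_am1
  have hPm1 := congrArg ι Pm1_mul_a1
  have hP0 := congrArg ι P0_mul_a1_mul_am1
  simp only [map_mul, map_sub, map_add] at hP1 hPm1 hP0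
  rw [sU_a1, sD_am1, b0_eq_neg_n0_div]
  refine ⟨?_, ?_, ?_⟩
  · field_simp
    linear_combination hP1
  · field_simp
    linear_combination hPm1
  · field_simp
    linear_combination hP0
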